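/- Let G be a finite simple graph and ℓ ≥ 1. A set B ⊆ V(G) is a specified ℓ-leaky forcing set if and only if B is an (ℓ−1)-leaky forcing set (with respect to vertex leaks) such that for every set L of ℓ−1 vertex leaks and every vertex v ∈ V(G) \ B, there exist two distinct vertices x ≠ y with x→v ∈ ℱ_L(B) and y→v ∈ ℱ_L(B). -/

import Mathlib

/-!
Zero forcing with leaks (vertex leaks, edge leaks, specified leaks, mixed leaks).

A force `u → v` is modelled as the ordered pair `(u, v) : V × V`.  All the
leak notions are encoded by a set `P` of *prohibited* forces.
-/

variable {V : Type*}

/-- With blue set `S` and prohibited set of forces `P`, vertex `u` can force `v`: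
`u` is blue, `v` is a white neighbor of `u`, every other neighbor of `u` is blue,
and the force `u → v` is not prohibited. -/
def CanForce (G : SimpleGraph V) (P : Set (V × V)) (S : Set V) (u v : V) : Prop :=
  u ∈ S ∧ v ∉ S ∧ G.Adj u v ∧ (∀ w, G.Adj u w → w ≠ v → w ∈ S) ∧ (u, v) ∉ P

/-- `Forced G P B v` means vertex `v` is eventually colored blue when the zero
forcing color change rule (avoiding the prohibited forces `P`) is applied
exhaustively starting from the blue set `B`. -/
inductive Forced (G : SimpleGraph V) (P : Set (V × V)) (B : Set V) : V → Prop
  | init : ∀ {v : V}, v ∈ B → Forced G P B v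
  | force : ∀ {u v : V}, G.Adj u v → (u, v) ∉ P → Forced G P B u →
      (∀ w, G.Adj u w → w ≠ v → Forced G P B w) → Forced G P B v

/-- `B^[∞]_P`, the set of blue vertices after exhaustively applying the zero
forcing rule with prohibited forces `P`, starting from `B`. -/
def closureSet (G : SimpleGraph V) (P : Set (V × V)) (B : Set V) : Set V :=
  {v | Forced G P B v}

/-- The prohibited forces corresponding to a set `L` of vertex leaks: a vertex
leak may not perform any force. -/
def vertexLeaks (L : Set V) : Set (V × V) := {p | p.1 ∈ L}

/-- The prohibited forces corresponding to a set `L` of edge leaks: no force may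
pass across an edge leak in either direction. -/
def edgeLeaksP (L : Set (Sym2 V)) : Set (V × V) := {p | s(p.1, p.2) ∈ L}

/-- `B` is an `ℓ`-leaky forcing set of `G`: despite any set of (at most) `ℓ`
vertex leaks, exhaustive forcing colors all of `V(G)` blue. -/
def IsLeakyForcingSet (G : SimpleGraph V) (ℓ : ℕ) (B : Set V) : Prop :=
  ∀ L : Finset V, L.card ≤ ℓ → closureSet G (vertexLeaks ↑L) B = Set.univ

/-- `B` is an `ℓ`-edge-leaky forcing set of `G`: despite any set of (at most)
`ℓ` edge leaks, exhaustive forcing colors all of `V(G)` blue. -/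
def IsEdgeLeakyForcingSet (G : SimpleGraph V) (ℓ : ℕ) (B : Set V) : Prop :=
  ∀ L : Finset (Sym2 V), ↑L ⊆ G.edgeSet → L.card ≤ ℓ →
    closureSet G (edgeLeaksP ↑L) B = Set.univ

/-- `B` is a specified `ℓ`-leaky forcing set of `G`: despite any set of (at
most) `ℓ` specified leaks (prohibited forces between adjacent vertices),
exhaustive forcing colors all of `V(G)` blue. -/
def IsSpecifiedLeakyForcingSet (G : SimpleGraph V) (ℓ : ℕ) (B : Set V) : Prop :=
  ∀ L : Finset (V × V), (∀ p ∈ L, G.Adj p.1 p.2) → L.card ≤ ℓ →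
    closureSet G (↑L) B = Set.univ

/-- `B` is a mixed `ℓ`-leaky forcing set of `G`: despite any set of (at most)
`ℓ` leaks, each a vertex leak, an edge leak, or a specified leak, exhaustive
forcing colors all of `V(G)` blue. -/
def IsMixedLeakyForcingSet (G : SimpleGraph V) (ℓ : ℕ) (B : Set V) : Prop :=
  ∀ (L₁ : Finset V) (L₂ : Finset (Sym2 V)) (L₃ : Finset (V × V)),
    ↑L₂ ⊆ G.edgeSet → (∀ p ∈ L₃, G.Adj p.1 p.2) →
    L₁.card + L₂.card + L₃.card ≤ ℓ →
    closureSet G (vertexLeaks ↑L₁ ∪ edgeLeaksP ↑L₂ ∪ (↑L₃ : Set (V × V))) B = Set.univ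

/-- A chronologically valid list of forces starting from a blue set. -/
def ValidList (G : SimpleGraph V) (P : Set (V × V)) : Set V → List (V × V) → Prop
  | _, [] => True
  | S, f :: l => CanForce G P S f.1 f.2 ∧ ValidList G P (insert f.2 S) l

/-- `F` is a forcing process (set of forces) of `B` in `G` with prohibited
forces `P`: the forces of `F` admit a chronological ordering in which each force
is valid and after applying all of them the whole graph is blue. -/
def IsForcingProcess (G : SimpleGraph V) (P : Set (V × V)) (B : Set V)
    (F : Set (V × V)) : Prop :=
  ∃ l : List (V × V), {f | f ∈ l} = F ∧ ValidList G P B l ∧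
    B ∪ Prod.snd '' F = Set.univ

/-- `B'` is obtained from `B` using `F`: `B` can color exactly `B'` blue using
only a subset of the forces in `F`, applied in a chronologically valid order. -/
def ObtainedUsing (G : SimpleGraph V) (P : Set (V × V)) (B : Set V) (F : Set (V × V))
    (B' : Set V) : Prop :=
  ∃ l : List (V × V), (∀ f ∈ l, f ∈ F) ∧ ValidList G P B l ∧
    B' = B ∪ Prod.snd '' {f | f ∈ l}

/-- `ℱ_P(B)`: the set of forces that belong to some forcing process of `B`
(with prohibited forces `P`). -/
def potentialForces (G : SimpleGraph V) (P : Set (V × V)) (B : Set V) : Set (V × V) :=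
  {f | ∃ F, IsForcingProcess G P B F ∧ f ∈ F}

/-- `Z_(ℓ)(G)`, the `ℓ`-leaky forcing number of `G`. -/
noncomputable def Zleaky (G : SimpleGraph V) (ℓ : ℕ) : ℕ :=
  sInf {n | ∃ B : Finset V, B.card = n ∧ IsLeakyForcingSet G ℓ ↑B}

/-- `Z'_(ℓ)(G)`, the `ℓ`-edge-leaky forcing number of `G`. -/
noncomputable def ZedgeLeaky (G : SimpleGraph V) (ℓ : ℕ) : ℕ :=
  sInf {n | ∃ B : Finset V, B.card = n ∧ IsEdgeLeakyForcingSet G ℓ ↑B}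

/-- `Z^s_(ℓ)(G)`, the specified `ℓ`-leaky forcing number of `G`. -/
noncomputable def Zspec (G : SimpleGraph V) (ℓ : ℕ) : ℕ :=
  sInf {n | ∃ B : Finset V, B.card = n ∧ IsSpecifiedLeakyForcingSet G ℓ ↑B}

/-- `Z^m_(ℓ)(G)`, the mixed `ℓ`-leaky forcing number of `G`. -/
noncomputable def Zmixed (G : SimpleGraph V) (ℓ : ℕ) : ℕ :=
  sInf {n | ∃ B : Finset V, B.card = n ∧ IsMixedLeakyForcingSet G ℓ ↑B}

/-- Two sets of specified leaks on `V(G)` are isomorphic if some bijection of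
the vertex set matches them up. -/
def LeaksIso (L₁ L₂ : Set (V × V)) : Prop :=
  ∃ φ : V ≃ V, ∀ x y : V, (x, y) ∈ L₁ ↔ (φ x, φ y) ∈ L₂

/-- `B` is an `L`-leaky forcing set of `G`: `B` colors all of `V(G)` blue
despite any set of specified leaks isomorphic to a subset of `L`. -/
def IsLLeakyForcingSet (G : SimpleGraph V) (L : Set (V × V)) (B : Set V) : Prop :=
  ∀ L' : Set (V × V), (∃ L₂ ⊆ L, LeaksIso L' L₂) → closureSet G L' B = Set.univ

/-- `L` is a set of independent leaks: `|T(L)| = |L|` and `T(L) ∩ H(L) = ∅`. -/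
def IsIndependentLeaks [DecidableEq V] (L : Finset (V × V)) : Prop :=
  (L.image Prod.fst).card = L.card ∧ Disjoint (L.image Prod.fst) (L.image Prod.snd)

/-- `I(L)`: the size of a largest set of independent leaks contained in `L`. -/
noncomputable def maxIndepLeaks [DecidableEq V] (L : Finset (V × V)) : ℕ :=
  sSup {n | ∃ M ⊆ L, IsIndependentLeaks M ∧ M.card = n}

/-- `Z_L(G)`, the `L`-leaky forcing number of `G`. -/
noncomputable def ZLleaky (G : SimpleGraph V) (L : Set (V × V)) : ℕ :=
  sInf {n | ∃ B : Finset V, B.card = n ∧ IsLLeakyForcingSet G L ↑B}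

/-!
Call a force *unblocked at* `C` if the colour change rule without leaks allows it when `C` is the
blue set. Each vertex performs at most one of these, and when exhaustive forcing under leaks has
stopped at `C`, all the forces unblocked at `C` are leaks.

A set of `ℓ` vertex leaks is therefore no stronger than `ℓ` specified leaks: where forcing stops,
only one force per leaking vertex is held back. So a specified leaky forcing set copes with
`ℓ - 1` vertex leaks, and, having found a force `x → v`, still copes when `x → v` is prohibited as
well, which gives a second force into `v`.

Conversely, let forcing under `ℓ` specified leaks stop at `C ≠ V(G)`, and let `x → w` be an
unblocked force at `C`; it is one of the leaks. Turn the tails of the other `ℓ - 1` specified leaks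
into vertex leaks instead. Then `x → w` is the only way out of `C`, so every forcing process
forces `w` by `x`.
-/

variable {G : SimpleGraph V} {P Q : Set (V × V)} {B C S : Set V} {F : Set (V × V)}
  {l : List (V × V)} {f : V × V} {u v w x y : V} {k ℓ : ℕ}

/-- The forces that the zero forcing rule without leaks allows when `S` is the blue set. Each ends
outside `S`, and forcing under leaks has stopped at `S` when all of them are leaks. -/
def unblockedForces (G : SimpleGraph V) (S : Set V) : Set (V × V) :=
  {f | CanForce G ∅ S f.1 f.2}

theorem canForce_iff_mem_unblockedForces :
    CanForce G P S u v ↔ (u, v) ∈ unblockedForces G S ∧ (u, v) ∉ P := by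
  simp [unblockedForces, CanForce, and_assoc]

theorem CanForce.mono (h : CanForce G P S u v) (hSC : S ⊆ C) (hv : v ∉ C) : CanForce G P C u v :=
  ⟨hSC h.1, hv, h.2.2.1, fun w huw hwv => hSC (h.2.2.2.1 w huw hwv), h.2.2.2.2⟩

theorem CanForce.anti_leaks (h : CanForce G Q S u v) (hPQ : P ⊆ Q) : CanForce G P S u v :=
  ⟨h.1, h.2.1, h.2.2.1, h.2.2.2.1, fun huv => h.2.2.2.2 (hPQ huv)⟩

theorem injOn_fst_unblockedForces : Set.InjOn Prod.fst (unblockedForces G S) := by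
  rintro ⟨u, v⟩ ⟨-, hv, huv, -⟩ ⟨_, w⟩ ⟨-, -, -, hS, -⟩ rfl
  by_contra hne
  exact hv (hS v huv fun hvw => hne (Prod.ext rfl hvw))

theorem subset_closureSet : B ⊆ closureSet G P B :=
  fun _ => Forced.init

theorem unblockedForces_closureSet_subset : unblockedForces G (closureSet G P B) ⊆ P := by
  rintro ⟨u, v⟩ ⟨hu, hv, huv, hw, -⟩
  by_contra hP
  exact hv (Forced.force huv hP hu hw)

theorem closureSet_subset (hBC : B ⊆ C) (hC : unblockedForces G C ⊆ P) :
    closureSet G P B ⊆ C := by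
  intro v hv
  induction hv with
  | init hv => exact hBC hv
  | force huv hP _ _ hu hw =>
    by_contra hv
    exact hP (hC ⟨hu, hv, huv, hw, Set.notMem_empty _⟩)

theorem exists_canForce_of_closureSet_eq_univ (h : closureSet G P B = Set.univ) (hBC : B ⊆ C)
    (hC : C ≠ Set.univ) : ∃ u v, CanForce G P C u v := by
  by_contra! hno
  have hsub : unblockedForces G C ⊆ P := fun f hf => by
    by_contra hP
    exact hno f.1 f.2 (canForce_iff_mem_unblockedForces.2 ⟨hf, hP⟩)
  exact hC (Set.univ_subset_iff.1 (h ▸ closureSet_subset hBC hsub))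

theorem ValidList.anti_leaks (hl : ValidList G Q S l) (hPQ : P ⊆ Q) : ValidList G P S l := by
  induction l generalizing S with
  | nil => trivial
  | cons f l ih => exact ⟨hl.1.anti_leaks hPQ, ih hl.2⟩

theorem ValidList.exists_superset_canForce (hl : ValidList G P S l) (hf : f ∈ l) :
    ∃ T, S ⊆ T ∧ CanForce G P T f.1 f.2 := by
  induction l generalizing S with
  | nil => exact absurd hf List.not_mem_nil
  | cons g l ih =>
    rcases List.mem_cons.1 hf with rfl | hf
    · exact ⟨S, subset_rfl, hl.1⟩
    · obtain ⟨T, hT, hfT⟩ := ih hl.2 hf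
      exact ⟨T, (Set.subset_insert _ _).trans hT, hfT⟩

theorem ValidList.snd_notMem (hl : ValidList G P S l) (hf : f ∈ l) : f.2 ∉ S := by
  obtain ⟨T, hST, hT⟩ := hl.exists_superset_canForce hf
  exact fun hS => hT.2.1 (hST hS)

theorem ValidList.left_unique (hl : ValidList G P S l) (hx : (x, v) ∈ l) (hy : (y, v) ∈ l) :
    x = y := by
  induction l generalizing S with
  | nil => exact absurd hx List.not_mem_nil
  | cons f l ih =>
    rcases List.mem_cons.1 hx with rfl | hx <;> rcases List.mem_cons.1 hy with hy | hy
    · exact (congrArg Prod.fst hy).symm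
    · exact absurd (Set.mem_insert v S) (hl.2.snd_notMem hy)
    · exact absurd (hy ▸ Set.mem_insert v S) (hl.2.snd_notMem hx)
    · exact ih hl.2 hx hy

theorem ValidList.exists_canForce_of_notMem (hl : ValidList G P S l) (hSC : S ⊆ C) (hf : f ∈ l)
    (hfC : f.2 ∉ C) : ∃ g ∈ l, CanForce G P C g.1 g.2 := by
  induction l generalizing S with
  | nil => exact absurd hf List.not_mem_nil
  | cons g l ih =>
    by_cases hgC : g.2 ∈ C
    · have hfl : f ∈ l := (List.mem_cons.1 hf).resolve_left fun h => hfC (h ▸ hgC)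
      obtain ⟨e, hel, heC⟩ := ih hl.2 (Set.insert_subset hgC hSC) hfl
      exact ⟨e, List.mem_cons_of_mem g hel, heC⟩
    · exact ⟨g, List.mem_cons_self, hl.1.mono hSC hgC⟩

theorem isForcingProcess_univ : IsForcingProcess G P Set.univ ∅ :=
  ⟨[], by simp, trivial, by simp⟩

theorem IsForcingProcess.insert_force (hF : IsForcingProcess G P (insert v B) F)
    (huv : CanForce G P B u v) : IsForcingProcess G P B (insert (u, v) F) := by
  obtain ⟨l, rfl, hl, hcover⟩ := hF
  refine ⟨(u, v) :: l, by ext; simp, ⟨huv, hl⟩, ?_⟩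
  rw [Set.image_insert_eq, ← hcover, Set.union_insert, Set.insert_union]

theorem IsForcingProcess.anti_leaks (hF : IsForcingProcess G Q B F) (hPQ : P ⊆ Q) :
    IsForcingProcess G P B F := by
  obtain ⟨l, hlF, hl, hcover⟩ := hF
  exact ⟨l, hlF, hl.anti_leaks hPQ, hcover⟩

theorem IsForcingProcess.exists_force (hF : IsForcingProcess G P B F) (hv : v ∉ B) :
    ∃ u, (u, v) ∈ F := by
  obtain ⟨-, -, -, hcover⟩ := hF
  have hvcover : v ∈ B ∪ Prod.snd '' F := hcover ▸ Set.mem_univ v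
  obtain ⟨⟨u, _⟩, huF, rfl⟩ := hvcover.resolve_left hv
  exact ⟨u, huF⟩

theorem IsForcingProcess.exists_canForce_of_notMem (hF : IsForcingProcess G P B F) (hBC : B ⊆ C)
    (hv : v ∉ C) : ∃ f ∈ F, CanForce G P C f.1 f.2 := by
  obtain ⟨u, huv⟩ := hF.exists_force fun hvB => hv (hBC hvB)
  obtain ⟨l, rfl, hl, -⟩ := hF
  exact hl.exists_canForce_of_notMem hBC huv hv

theorem exists_isForcingProcess (h : closureSet G P B = Set.univ) (hBS : B ⊆ S)
    (hS : Sᶜ.Finite) : ∃ F, IsForcingProcess G P S F := by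
  induction hn : Sᶜ.ncard using Nat.strong_induction_on generalizing S with
  | _ n ih =>
    by_cases hSuniv : S = Set.univ
    · exact ⟨∅, hSuniv ▸ isForcingProcess_univ⟩
    obtain ⟨u, v, huv⟩ := exists_canForce_of_closureSet_eq_univ h hBS hSuniv
    have hssub : (insert v S)ᶜ ⊂ Sᶜ := compl_lt_compl_iff_lt.2 (Set.ssubset_insert huv.2.1)
    obtain ⟨F, hF⟩ := ih _ (hn ▸ Set.ncard_lt_ncard hssub hS)
      (hBS.trans (Set.subset_insert v S)) (hS.subset hssub.subset) rfl
    exact ⟨_, hF.insert_force huv⟩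

theorem potentialForces_anti (hPQ : P ⊆ Q) : potentialForces G Q B ⊆ potentialForces G P B := by
  rintro f ⟨F, hF, hfF⟩
  exact ⟨F, hF.anti_leaks hPQ, hfF⟩

theorem exists_canForce_of_mem_potentialForces (hf : f ∈ potentialForces G P B) :
    ∃ T, CanForce G P T f.1 f.2 := by
  obtain ⟨_, ⟨l, rfl, hl, -⟩, hfl⟩ := hf
  obtain ⟨T, -, hT⟩ := hl.exists_superset_canForce hfl
  exact ⟨T, hT⟩

theorem adj_of_mem_potentialForces (hf : f ∈ potentialForces G P B) : G.Adj f.1 f.2 := by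
  obtain ⟨_, hT⟩ := exists_canForce_of_mem_potentialForces hf
  exact hT.2.2.1

theorem notMem_of_mem_potentialForces (hf : f ∈ potentialForces G P B) : f ∉ P := by
  obtain ⟨_, hT⟩ := exists_canForce_of_mem_potentialForces hf
  exact hT.2.2.2.2

theorem exists_mem_potentialForces (hB : Bᶜ.Finite) (h : closureSet G P B = Set.univ)
    (hv : v ∉ B) : ∃ u, (u, v) ∈ potentialForces G P B := by
  obtain ⟨F, hF⟩ := exists_isForcingProcess h subset_rfl hB
  obtain ⟨u, huF⟩ := hF.exists_force hv
  exact ⟨u, F, hF, huF⟩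

theorem eq_of_mem_potentialForces (hBC : B ⊆ C) (hw : w ∉ C)
    (h : unblockedForces G C ⊆ insert (x, w) P) (hy : (y, w) ∈ potentialForces G P B) :
    y = x := by
  obtain ⟨F, hF, hyF⟩ := hy
  obtain ⟨g, hgF, hgC⟩ := hF.exists_canForce_of_notMem hBC hw
  obtain ⟨hg, hgP⟩ := canForce_iff_mem_unblockedForces.1 hgC
  have hgxw : g = (x, w) := (h hg).resolve_right hgP
  obtain ⟨l, rfl, hl, -⟩ := hF
  exact hl.left_unique hyF (hgxw ▸ hgF)

theorem exists_finset_coe_eq_unblockedForces_inter_vertexLeaks (G : SimpleGraph V) (S : Set V)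
    (L : Finset V) :
    ∃ M : Finset (V × V), ↑M = unblockedForces G S ∩ vertexLeaks ↑L ∧ M.card ≤ L.card := by
  have hmaps : Set.MapsTo Prod.fst (unblockedForces G S ∩ vertexLeaks ↑L) (L : Set V) :=
    fun _ hf => hf.2
  have hinj : Set.InjOn Prod.fst (unblockedForces G S ∩ vertexLeaks ↑L) :=
    injOn_fst_unblockedForces.mono Set.inter_subset_left
  lift unblockedForces G S ∩ vertexLeaks ↑L to Finset (V × V)
    using .of_injOn hmaps hinj L.finite_toSet with M
  exact ⟨M, rfl, Finset.card_le_card_of_injOn Prod.fst hmaps hinj⟩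

theorem exists_finset_subset_insert_vertexLeaks {M : Finset (V × V)} (hf : f ∈ M)
    (hM : M.card ≤ ℓ + 1) :
    ∃ L : Finset V, L.card ≤ ℓ ∧ (M : Set (V × V)) ⊆ insert f (vertexLeaks ↑L) := by
  classical
  refine ⟨(M.erase f).image Prod.fst, ?_, fun g hg => ?_⟩
  · calc ((M.erase f).image Prod.fst).card
        ≤ (M.erase f).card := Finset.card_image_le
      _ = M.card - 1 := Finset.card_erase_of_mem hf
      _ ≤ ℓ := Nat.sub_le_of_le_add hM
  · by_cases hgf : g = f
    · exact Or.inl hgf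
    · exact Or.inr (Finset.mem_image_of_mem Prod.fst (Finset.mem_erase.2 ⟨hgf, hg⟩))

theorem IsLeakyForcingSet.anti (h : IsLeakyForcingSet G ℓ B) (hk : k ≤ ℓ) :
    IsLeakyForcingSet G k B :=
  fun L hL => h L (hL.trans hk)

theorem IsSpecifiedLeakyForcingSet.closureSet_vertexLeaks_union_eq_univ
    (h : IsSpecifiedLeakyForcingSet G ℓ B) (L : Finset V) (Q : Finset (V × V))
    (hQ : ∀ p ∈ Q, G.Adj p.1 p.2) (hcard : L.card + Q.card ≤ ℓ) :
    closureSet G (vertexLeaks ↑L ∪ ↑Q) B = Set.univ := by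
  classical
  set C := closureSet G (vertexLeaks ↑L ∪ ↑Q) B
  obtain ⟨M, hM, hMcard⟩ := exists_finset_coe_eq_unblockedForces_inter_vertexLeaks G C L
  have hMadj : ∀ p ∈ M, G.Adj p.1 p.2 := fun p hp =>
    (hM.subset (Finset.mem_coe.2 hp)).1.2.2.1
  have huniv : closureSet G ↑(M ∪ Q) B = Set.univ :=
    h (M ∪ Q) (fun p hp => (Finset.mem_union.1 hp).elim (hMadj p) (hQ p))
      ((Finset.card_union_le M Q).trans (by lia))
  have hC : unblockedForces G C ⊆ ↑(M ∪ Q) := fun f hf => by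
    rw [Finset.coe_union, hM]
    exact (unblockedForces_closureSet_subset hf).imp_left (And.intro hf)
  exact Set.univ_subset_iff.1 (huniv ▸ closureSet_subset subset_closureSet hC)

theorem IsSpecifiedLeakyForcingSet.isLeakyForcingSet (h : IsSpecifiedLeakyForcingSet G ℓ B) :
    IsLeakyForcingSet G ℓ B := fun L hL => by
  simpa using h.closureSet_vertexLeaks_union_eq_univ L ∅ (by simp) (by simpa using hL)

theorem IsSpecifiedLeakyForcingSet.exists_ne_mem_potentialForces
    (h : IsSpecifiedLeakyForcingSet G (ℓ + 1) B) (hB : Bᶜ.Finite) {L : Finset V}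
    (hL : L.card ≤ ℓ) (hv : v ∉ B) :
    ∃ x y, x ≠ y ∧ (x, v) ∈ potentialForces G (vertexLeaks ↑L) B ∧
      (y, v) ∈ potentialForces G (vertexLeaks ↑L) B := by
  obtain ⟨x, hx⟩ := exists_mem_potentialForces hB (h.isLeakyForcingSet L (hL.trans ℓ.le_succ)) hv
  have huniv := h.closureSet_vertexLeaks_union_eq_univ L {(x, v)}
    (by simpa using adj_of_mem_potentialForces hx) (by simpa using hL)
  obtain ⟨y, hy⟩ := exists_mem_potentialForces hB huniv hv
  refine ⟨x, y, ?_, hx, potentialForces_anti Set.subset_union_left hy⟩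
  rintro rfl
  exact notMem_of_mem_potentialForces hy (Or.inr (by simp))

theorem isSpecifiedLeakyForcingSet_succ_of_exists_ne
    (htwo : ∀ L : Finset V, L.card ≤ ℓ → ∀ v ∉ B, ∃ x y, x ≠ y ∧
      (x, v) ∈ potentialForces G (vertexLeaks ↑L) B ∧
      (y, v) ∈ potentialForces G (vertexLeaks ↑L) B) :
    IsSpecifiedLeakyForcingSet G (ℓ + 1) B := by
  intro Q _ hQcard
  set C := closureSet G ↑Q B
  have hBC : B ⊆ C := subset_closureSet
  by_contra hne
  obtain ⟨v, hv⟩ := (Set.ne_univ_iff_exists_notMem C).1 hne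
  obtain ⟨_, _, _, ⟨F, hF, _⟩, _⟩ := htwo ∅ (Nat.zero_le ℓ) v fun hvB => hv (hBC hvB)
  obtain ⟨⟨x, w⟩, -, hxw⟩ := hF.exists_canForce_of_notMem hBC hv
  have hCQ : unblockedForces G C ⊆ ↑Q := unblockedForces_closureSet_subset
  obtain ⟨L, hL, hQL⟩ := exists_finset_subset_insert_vertexLeaks
    (hCQ (canForce_iff_mem_unblockedForces.1 hxw).1) hQcard
  obtain ⟨a, b, hab, ha, hb⟩ := htwo L hL w fun hwB => hxw.2.1 (hBC hwB)
  have heq {y : V} : (y, w) ∈ potentialForces G (vertexLeaks ↑L) B → y = x :=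
    eq_of_mem_potentialForces hBC hxw.2.1 (hCQ.trans hQL)
  exact hab ((heq ha).trans (heq hb).symm)

theorem statement7_general (G : SimpleGraph V) (ℓ : ℕ) {B : Set V} (hB : Bᶜ.Finite) :
    IsSpecifiedLeakyForcingSet G (ℓ + 1) B ↔
      (IsLeakyForcingSet G ℓ B ∧
        ∀ L : Finset V, L.card ≤ ℓ → ∀ v : V, v ∉ B →
          ∃ x y : V, x ≠ y ∧ (x, v) ∈ potentialForces G (vertexLeaks ↑L) B ∧
            (y, v) ∈ potentialForces G (vertexLeaks ↑L) B) :=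
  ⟨fun h => ⟨h.isLeakyForcingSet.anti ℓ.le_succ,
      fun _ hL _ hv => h.exists_ne_mem_potentialForces hB hL hv⟩,
    fun h => isSpecifiedLeakyForcingSet_succ_of_exists_ne h.2⟩

/-- Theorem `specsetofforces`: `B` is a specified `ℓ`-leaky
forcing set iff `B` is an `(ℓ-1)`-leaky forcing set (w.r.t. vertex leaks) such
that for every set `L` of `ℓ-1` vertex leaks and every `v ∈ V(G) \ B` there are
two distinct forces `x→v, y→v ∈ ℱ_L(B)`. -/
theorem statement7 [Fintype V] [DecidableEq V] (G : SimpleGraph V) (ℓ : ℕ)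
    (hℓ : 1 ≤ ℓ) (B : Set V) :
    IsSpecifiedLeakyForcingSet G ℓ B ↔
      (IsLeakyForcingSet G (ℓ - 1) B ∧
        ∀ L : Finset V, L.card ≤ ℓ - 1 → ∀ v : V, v ∉ B →
          ∃ x y : V, x ≠ y ∧ (x, v) ∈ potentialForces G (vertexLeaks ↑L) B ∧
            (y, v) ∈ potentialForces G (vertexLeaks ↑L) B) := by
  obtain ⟨k, rfl⟩ := Nat.exists_eq_add_of_le' hℓ
  exact statement7_general G k (Set.toFinite Bᶜ)
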